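/- arXiv:math/0103011 — 2 statements merged into one kernel-verified Lean document; each statement's English description precedes it below -/
import Mathlib

section
/- For every n ≥ 0 and every face a of I^{n+1} lying in the image of φ_n^-, one has (∂^-R(a))^⊥ = ∂^-R(a^⊥), where the left-hand operator ∂^- is computed in the cube I^{n+1} and the right-hand operator ∂^- is computed in the simplex Δ^n. -/
/-- Positions of the letter `0` in a face (word over `{−,0,+}`) of the cube. -/
def zeros {N : ℕ} (a : Fin N → SignType) : Finset (Fin N) :=
  Finset.univ.filter fun i => a i = SignType.zero

/-- `b` is a subface of the cube face `a` iff at each position `b i = a i` or `a i = 0`. -/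
def subfaceC {N : ℕ} (b a : Fin N → SignType) : Prop :=
  ∀ i, b i = a i ∨ a i = SignType.zero

/-- `R(a)`: the set of all subfaces of a cube face `a`. -/
def RC {N : ℕ} (a : Fin N → SignType) : Set (Fin N → SignType) :=
  { b | subfaceC b a }

/-- `s_a` for a cube face `a`: replace the `j`-th zero (1-based) by `−` if `j` is odd
and by `+` if `j` is even. -/
def cubeS {N : ℕ} (a : Fin N → SignType) : Set (Fin N → SignType) :=
  { b | ∃ k : Fin (zeros a).card,
      b = Function.update a ((zeros a).orderEmbOfFin rfl k)
            (if k.val % 2 = 0 then SignType.neg else SignType.pos) }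

/-- `t_a` for a cube face `a`: replace the `j`-th zero (1-based) by `+` if `j` is odd
and by `−` if `j` is even. -/
def cubeT {N : ℕ} (a : Fin N → SignType) : Set (Fin N → SignType) :=
  { b | ∃ k : Fin (zeros a).card,
      b = Function.update a ((zeros a).orderEmbOfFin rfl k)
            (if k.val % 2 = 0 then SignType.pos else SignType.neg) }

/-- `∂^-R(a) = ⋃_{b ∈ s_a} R(b)` in the cube (`= ∅` when `dim a = 0` since `s_a = ∅`). -/
def bdryCneg {N : ℕ} (a : Fin N → SignType) : Set (Fin N → SignType) :=
  ⋃ b ∈ cubeS a, RC b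

/-- `∂^+R(a) = ⋃_{b ∈ t_a} R(b)` in the cube (`= ∅` when `dim a = 0` since `t_a = ∅`). -/
def bdryCpos {N : ℕ} (a : Fin N → SignType) : Set (Fin N → SignType) :=
  ⋃ b ∈ cubeT a, RC b

/-- `R(σ)`: the set of all subfaces (nonempty subsets) of a simplex face `σ`. -/
def RS {m : ℕ} (σ : Finset (Fin m)) : Set (Finset (Fin m)) :=
  { τ | τ.Nonempty ∧ τ ⊆ σ }

/-- `s_σ` for a simplex face `σ = {σ_0 < … < σ_r}`: the faces `σ \ {σ_{2k}}`. -/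
def simpS {m : ℕ} (σ : Finset (Fin m)) : Set (Finset (Fin m)) :=
  { τ | ∃ k : Fin σ.card, k.val % 2 = 0 ∧ τ = σ.erase (σ.orderEmbOfFin rfl k) }

/-- `t_σ` for a simplex face `σ = {σ_0 < … < σ_r}`: the faces `σ \ {σ_{2k+1}}`. -/
def simpT {m : ℕ} (σ : Finset (Fin m)) : Set (Finset (Fin m)) :=
  { τ | ∃ k : Fin σ.card, k.val % 2 = 1 ∧ τ = σ.erase (σ.orderEmbOfFin rfl k) }

/-- `∂^-R(σ) = ⋃_{τ ∈ s_σ} R(τ)` in the simplex (`= ∅` when `dim σ = 0`, since the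
removal of the unique vertex gives the empty set, which has no nonempty subsets). -/
def bdrySneg {m : ℕ} (σ : Finset (Fin m)) : Set (Finset (Fin m)) :=
  ⋃ τ ∈ simpS σ, RS τ

/-- `∂^+R(σ) = ⋃_{τ ∈ t_σ} R(τ)` in the simplex. -/
def bdrySpos {m : ℕ} (σ : Finset (Fin m)) : Set (Finset (Fin m)) :=
  ⋃ τ ∈ simpT σ, RS τ

/-- `phi σ` is the map `φ_n^-` sending a face `σ` of `Δ^n` to the face of `I^{n+1}`
whose letter at position `i` is `0` when `i ∈ σ` and `−` otherwise. -/
def phi {m : ℕ} (σ : Finset (Fin m)) : Fin m → SignType :=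
  fun i => if i ∈ σ then SignType.zero else SignType.neg

/-- `y^⊥ = {i : y i = 0}`, the unique `φ`-preimage of a cube face `y ∈ Im φ`. -/
def perpF {N : ℕ} (y : Fin N → SignType) : Finset (Fin N) :=
  Finset.univ.filter fun i => y i = SignType.zero

/-- `X^⊥ = { y^⊥ : y ∈ X ∩ Im φ }` for a set `X` of cube faces. -/
def perpSet {N : ℕ} (X : Set (Fin N → SignType)) : Set (Finset (Fin N)) :=
  { τ | ∃ y ∈ X, (∃ σ : Finset (Fin N), σ.Nonempty ∧ phi σ = y) ∧ τ = perpF y }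

/-!
The operation `X ↦ X^⊥` is the preimage under `φ`, so it commutes with unions, and it suffices to
compute `R(b)^⊥` for each facet `b ∈ s_a` of `a = φ σ`. Writing `−` at a position `i` of `φ σ`
gives `φ (σ \ {i})`, and `φ τ` is a subface of `φ σ'` exactly when `τ ⊆ σ'`; hence the facets
with a `−` (the odd values of `j`, that is, the vertices `σ_{2k}`) contribute `R(σ \ {σ_{2k}})`.
A facet with a `+` contributes nothing, since all of its subfaces keep that `+`, while a word in the
image of `φ` has no `+`.
-/

open Function

section Phi

variable {N : ℕ} {σ τ : Finset (Fin N)} {i : Fin N}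

theorem phi_eq_zero_iff : phi σ i = SignType.zero ↔ i ∈ σ := by
  by_cases hi : i ∈ σ <;> simp [phi, hi]

theorem phi_eq_neg_iff : phi σ i = SignType.neg ↔ i ∉ σ := by
  by_cases hi : i ∈ σ <;> simp [phi, hi]

theorem phi_ne_pos : phi σ i ≠ SignType.pos := by
  by_cases hi : i ∈ σ <;> simp [phi, hi]

theorem perpF_phi (σ : Finset (Fin N)) : perpF (phi σ) = σ := by
  ext i
  rw [perpF, Finset.mem_filter_univ, phi_eq_zero_iff]

theorem zeros_phi (σ : Finset (Fin N)) : zeros (phi σ) = σ :=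
  perpF_phi σ

theorem update_phi_neg (σ : Finset (Fin N)) (i : Fin N) :
    update (phi σ) i SignType.neg = phi (σ.erase i) := by
  ext j
  obtain rfl | hij := eq_or_ne j i
  · simp [phi]
  · simp [phi, hij]

theorem subfaceC_phi_iff : subfaceC (phi τ) (phi σ) ↔ τ ⊆ σ := by
  refine ⟨fun h i hi => ?_, fun h i => ?_⟩
  · rcases h i with heq | hzero
    · exact phi_eq_zero_iff.1 (heq ▸ phi_eq_zero_iff.2 hi)
    · exact phi_eq_zero_iff.1 hzero
  · by_cases hi : i ∈ σ
    · exact .inr (phi_eq_zero_iff.2 hi)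
    · exact .inl ((phi_eq_neg_iff.2 fun hτ => hi (h hτ)).trans (phi_eq_neg_iff.2 hi).symm)

end Phi

section Perp

variable {N : ℕ}

theorem mem_perpSet_iff {X : Set (Fin N → SignType)} {τ : Finset (Fin N)} :
    τ ∈ perpSet X ↔ τ.Nonempty ∧ phi τ ∈ X := by
  constructor
  · rintro ⟨_, hX, ⟨ρ, hρ, rfl⟩, rfl⟩
    rw [perpF_phi]
    exact ⟨hρ, hX⟩
  · rintro ⟨hτ, hX⟩
    exact ⟨phi τ, hX, ⟨τ, hτ, rfl⟩, (perpF_phi τ).symm⟩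

theorem perpSet_iUnion {ι : Sort*} (X : ι → Set (Fin N → SignType)) :
    perpSet (⋃ i, X i) = ⋃ i, perpSet (X i) := by
  ext τ
  simp only [mem_perpSet_iff, Set.mem_iUnion, exists_and_left]

theorem perpSet_RC_phi (σ : Finset (Fin N)) : perpSet (RC (phi σ)) = RS σ := by
  ext τ
  exact mem_perpSet_iff.trans (and_congr_right fun _ => subfaceC_phi_iff)

theorem perpSet_RC_eq_empty {a : Fin N → SignType} {i : Fin N} (hi : a i = SignType.pos) :
    perpSet (RC a) = ∅ := by
  refine Set.eq_empty_of_forall_notMem fun τ hτ => ?_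
  rcases (mem_perpSet_iff.1 hτ).2 i with heq | hzero
  · exact phi_ne_pos (heq.trans hi)
  · exact absurd (hi.symm.trans hzero) (by decide)

theorem perpSet_RC_update_phi (σ : Finset (Fin N)) (i : Fin N) (p : Prop) [Decidable p] :
    perpSet (RC (update (phi σ) i (if p then SignType.neg else SignType.pos))) =
      ⋃ _ : p, RS (σ.erase i) := by
  by_cases hp : p
  · simp only [hp, if_true, Set.iUnion_true, update_phi_neg, perpSet_RC_phi]
  · simp only [hp, if_false, Set.iUnion_false]
    exact perpSet_RC_eq_empty (update_self ..)

end Perp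

theorem bdryCneg_eq_iUnion {N : ℕ} (a : Fin N → SignType) :
    bdryCneg a = ⋃ k : Fin (zeros a).card,
      RC (update a ((zeros a).orderEmbOfFin rfl k)
        (if k.val % 2 = 0 then SignType.neg else SignType.pos)) := by
  simp only [bdryCneg, cubeS, Set.mem_ofPred_eq, Set.iUnion_exists]
  rw [Set.iUnion_comm]
  simp only [Set.iUnion_iUnion_eq_left]

theorem bdrySneg_eq_iUnion {m : ℕ} (σ : Finset (Fin m)) :
    bdrySneg σ = ⋃ k : Fin σ.card, ⋃ _ : k.val % 2 = 0,
      RS (σ.erase (σ.orderEmbOfFin rfl k)) := by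
  simp only [bdrySneg, simpS, Set.mem_ofPred_eq, Set.iUnion_exists, Set.iUnion_and]
  rw [Set.iUnion_comm]
  refine Set.iUnion_congr fun k => ?_
  rw [Set.iUnion_comm]
  simp only [Set.iUnion_iUnion_eq_left]

/-- For every face `a` of `I^{n+1}` in the image of `φ_n^-`,
`(∂^-R(a))^⊥ = ∂^-R(a^⊥)`. -/
theorem stmt3 (n : ℕ) (a : Fin (n + 1) → SignType)
    (ha : ∃ σ : Finset (Fin (n + 1)), σ.Nonempty ∧ phi σ = a) :
    perpSet (bdryCneg a) = bdrySneg (perpF a) := by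
  obtain ⟨σ, -, rfl⟩ := ha
  rw [bdryCneg_eq_iUnion, perpSet_iUnion, zeros_phi, perpF_phi, bdrySneg_eq_iUnion]
  exact Set.iUnion_congr fun k => perpSet_RC_update_phi σ (σ.orderEmbOfFin rfl k) _
end

section
/- Fix n ≥ 0 and 0 ≤ i ≤ n. For every face σ of Δ^{n+1} one has φ_n^-(η_i·σ) = γ_{i+1}^-(φ_{n+1}^-(σ)), where η_i·σ := {η_i(j) : j ∈ σ} (the image of σ under the codegeneracy map η_i of the simplex category) and γ_{i+1}^- is the map sending a word k_1⋯k_{n+2} of length n+2 over {−,0,+} to the word k_1⋯k_i max(k_{i+1},k_{i+2}) k_{i+3}⋯k_{n+2} of length n+1, the maximum being taken with respect to the order − < 0 < +. In other words, the square relating the simplicial codegeneracy operators on the simplexes Δ^* to the operators γ^-_{i+1} on the cubes I^{*+1} via the maps φ_*^- commutes. -/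
/-- `γ_{i+1}^-`: the map sending a word `k_0 ⋯ k_{n+1}` of length `n+2` over `{−,0,+}`
to the word of length `n+1` keeping the letters before position `i`, replacing the two
letters at positions `i, i+1` by their maximum (for `− < 0 < +`), and keeping the
letters after them. -/
def gammaNeg {n : ℕ} (i : Fin (n + 1)) (k : Fin (n + 2) → SignType) :
    Fin (n + 1) → SignType :=
  fun ℓ =>
    if ℓ.val < i.val then k ℓ.castSucc
    else if ℓ = i then max (k ℓ.castSucc) (k ℓ.succ)
    else k ℓ.succ

/-- Push-forward of a word `k` along a map `f` of positions: the letter at `b` is the supremum of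
the letters of `k` over the fiber of `f` at `b`, hence `⊥` if that fiber is empty. For this
push-forward `φ^-` is natural in maps of vertices, and `γ^-` is the push-forward along a
codegeneracy. -/
def fiberSup {α β γ : Type*} [Fintype α] [DecidableEq β] [SemilatticeSup γ] [OrderBot γ]
    (f : α → β) (k : α → γ) : β → γ :=
  fun b => ({a | f a = b} : Finset α).sup k

theorem fiberSup_le_iff {α β γ : Type*} [Fintype α] [DecidableEq β] [SemilatticeSup γ]
    [OrderBot γ] {f : α → β} {k : α → γ} {b : β} {c : γ} :
    fiberSup f k b ≤ c ↔ ∀ a, f a = b → k a ≤ c := by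
  simp only [fiberSup, Finset.sup_le_iff, Finset.mem_filter_univ]

theorem phi_le_iff {m : ℕ} {σ : Finset (Fin m)} {i : Fin m} {s : SignType} :
    phi σ i ≤ s ↔ (i ∈ σ → 0 ≤ s) := by
  by_cases hi : i ∈ σ
  · have hzero : phi σ i = 0 := if_pos hi
    simp only [hzero, hi, forall_const]
  · have hbot : phi σ i = ⊥ := if_neg hi
    simp only [hbot, bot_le, hi, false_imp_iff]

theorem phi_image {m m' : ℕ} (f : Fin m → Fin m') (σ : Finset (Fin m)) :
    phi (σ.image f) = fiberSup f (phi σ) := by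
  funext l
  refine eq_of_forall_ge_iff fun s => ?_
  calc phi (σ.image f) l ≤ s
      ↔ ∀ j, f j = l → j ∈ σ → 0 ≤ s := by
        simp only [phi_le_iff, Finset.mem_image]
        grind
    _ ↔ fiberSup f (phi σ) l ≤ s := by
        simp only [fiberSup_le_iff, phi_le_iff]

theorem predAbove_eq_iff {n : ℕ} {p l : Fin n} {j : Fin (n + 1)} :
    p.predAbove j = l ↔ (l ≤ p ∧ j = l.castSucc) ∨ (p ≤ l ∧ j = l.succ) := by
  constructor
  · rintro rfl
    rcases le_or_gt j p.castSucc with hj | hj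
    · left
      rw [Fin.predAbove_of_le_castSucc p j hj]
      exact ⟨(Fin.castPred_le_iff _).mpr hj, (Fin.castSucc_castPred j _).symm⟩
    · right
      rw [Fin.predAbove_of_castSucc_lt p j hj]
      exact ⟨(Fin.le_pred_iff _).mpr (Fin.castSucc_lt_iff_succ_le.mp hj), (Fin.succ_pred j _).symm⟩
  · rintro (⟨hl, rfl⟩ | ⟨hl, rfl⟩)
    · exact Fin.predAbove_castSucc_of_le p l hl
    · exact Fin.predAbove_succ_of_le p l hl

theorem gammaNeg_le_iff {n : ℕ} {i l : Fin (n + 1)} {k : Fin (n + 2) → SignType} {s : SignType} :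
    gammaNeg i k l ≤ s ↔ (l ≤ i → k l.castSucc ≤ s) ∧ (i ≤ l → k l.succ ≤ s) := by
  rcases lt_trichotomy l i with hl | rfl | hl
  · simp [gammaNeg, hl, hl.le, hl.not_ge]
  · simp [gammaNeg]
  · simp [gammaNeg, hl.not_gt, hl.ne', hl.le, hl.not_ge]

theorem gammaNeg_eq_fiberSup_predAbove {n : ℕ} (i : Fin (n + 1)) (k : Fin (n + 2) → SignType) :
    gammaNeg i k = fiberSup i.predAbove k := by
  funext l
  refine eq_of_forall_ge_iff fun s => ?_
  calc gammaNeg i k l ≤ s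
      ↔ (l ≤ i → k l.castSucc ≤ s) ∧ (i ≤ l → k l.succ ≤ s) := gammaNeg_le_iff
    _ ↔ ∀ j, (l ≤ i ∧ j = l.castSucc) ∨ (i ≤ l ∧ j = l.succ) → k j ≤ s := by
        grind
    _ ↔ fiberSup i.predAbove k l ≤ s := by
        simp only [fiberSup_le_iff, predAbove_eq_iff]

/-- For every face `σ` of `Δ^{n+1}`, `φ_n^-(η_i·σ) = γ_{i+1}^-(φ_{n+1}^-(σ))`, where
`η_i·σ` is the image of `σ` under the codegeneracy map `η_i` (`j ↦ j` for `j ≤ i`,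
`j ↦ j−1` for `j > i`, i.e. `Fin.predAbove i`). -/
theorem stmt7 (n : ℕ) (i : Fin (n + 1)) (σ : Finset (Fin (n + 2)))
    (hσ : σ.Nonempty) :
    phi (σ.image (Fin.predAbove i)) = gammaNeg i (phi σ) := by
  rw [phi_image, gammaNeg_eq_fiberSup_predAbove]
end
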